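/- Let χ ∈ ℤ¹⁰ be the vector (1,1,1,1,1,0,0,0,0,0), the indicator vector of the shaded regions, and let 𝟙 ∈ ℤ¹⁰ be the all-ones vector. Then for every x ∈ ℤ¹⁰ with M·x = 0 (matrix–vector multiplication over ℤ), there exist integers a and b such that x = a·𝟙 + b·χ. (Over ℤ, every Dehn coloring of the diagram is an integer combination of the trivial coloring and the checkerboard coloring.) -/

import Mathlib

/-- The Dehn coloring matrix of the standard 8-crossing diagram of the knot 8₁₉. -/
def M : Matrix (Fin 8) (Fin 10) ℤ :=
  !![-1,  1,  0,  0,  0, -1,  1,  0,  0,  0;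
      0, -1,  0,  1,  0,  0, -1,  1,  0,  0;
     -1,  0,  0,  0,  1,  1,  0,  0,  0, -1;
      0,  0,  1,  0, -1, -1,  0,  1,  0,  0;
     -1,  0,  0,  1,  0,  0, -1,  0,  1,  0;
      0,  0,  0, -1,  1,  0,  0,  1, -1,  0;
      0,  1, -1,  0,  0, -1,  0,  1,  0,  0;
     -1,  0,  0,  0,  1,  0,  0,  0, -1,  1]

/-- The indicator vector of the shaded regions. -/
def chi : Fin 10 → ℤ := ![1, 1, 1, 1, 1, 0, 0, 0, 0, 0]

/-- Over `ℤ`, every Dehn coloring of the diagram is an integer combination of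
the trivial coloring (all-ones vector) and the checkerboard coloring `chi`. -/
theorem stmt11 (x : Fin 10 → ℤ) (hx : M.mulVec x = 0) :
    ∃ a b : ℤ, x = a • (fun _ => 1 : Fin 10 → ℤ) + b • chi := by
  have h0 := congrFun hx 0
  have h1 := congrFun hx 1
  have h2 := congrFun hx 2
  have h3 := congrFun hx 3
  have h4 := congrFun hx 4
  have h5 := congrFun hx 5
  have h6 := congrFun hx 6
  have h7 := congrFun hx 7
  simp [M, Matrix.mulVec, dotProduct, Fin.sum_univ_succ] at h0 h1 h2 h3 h4 h5 h6 h7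
  refine ⟨x 5, x 0 - x 5, ?_⟩
  ext i
  fin_cases i <;> simp [chi] <;> omega
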